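/- Let k be a field of characteristic zero and n ≥ 1. For all n×n matrices α, β over k, the standard polynomial of degree 2n evaluated at the matrices α, αβ, αβ², …, αβ^{2n−1} vanishes; that is, Σ_{σ ∈ S_{2n}} sgn(σ) · (αβ^{σ(1)−1})(αβ^{σ(2)−1}) ⋯ (αβ^{σ(2n)−1}) = 0 in M_n(k). -/

import Mathlib

/-!
The standard polynomial is alternating, so it vanishes as soon as one argument is a linear
combination of the others. By Cayley–Hamilton `βⁿ` is a linear combination of `1, β, …, βⁿ⁻¹`, and
left multiplication by `α` preserves this relation. Since `n < 2n`, the argument `αβⁿ` is one of the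
`2n` matrices `α, αβ, …, αβ²ⁿ⁻¹`, as are `α, αβ, …, αβⁿ⁻¹`.
-/

open Polynomial

theorem alternatingMap_eq_zero_of_mem_span {R M N ι : Type*} [Semiring R]
    [AddCommMonoid M] [Module R M] [AddCommMonoid N] [Module R N] (f : M [⋀^ι]→ₗ[R] N)
    {v : ι → M} {i : ι} (hi : v i ∈ Submodule.span R (v '' {i}ᶜ)) : f v = 0 := by
  classical
  have span_le_ker : Submodule.span R (v '' {i}ᶜ) ≤ (f.toMultilinearMap.toLinearMap v i).ker := by
    rw [Submodule.span_le]
    rintro _ ⟨j, hj, rfl⟩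
    exact f.map_update_self v (Ne.symm hj)
  simpa using span_le_ker hi

section Algebra

variable {R A N : Type*} [CommRing R] [Ring A] [Algebra R A] [AddCommMonoid N] [Module R N]
  {p : R[X]} {b : A} {m : ℕ}

theorem pow_natDegree_mem_span_of_monic (hp : p.Monic) (hb : aeval b p = 0) :
    b ^ p.natDegree ∈ Submodule.span R ((b ^ ·) '' Set.Iio p.natDegree) := by
  have pow_add_sum_eq_zero :
      b ^ p.natDegree + ∑ i ∈ Finset.range p.natDegree, p.coeff i • b ^ i = 0 := by
    rw [← hb, aeval_eq_sum_range, Finset.sum_range_succ_comm, hp.coeff_natDegree, one_smul]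
  rw [eq_neg_of_add_eq_zero_left pow_add_sum_eq_zero]
  exact neg_mem <| sum_mem fun i hi ↦ Submodule.smul_mem _ _ <|
    Submodule.subset_span ⟨i, Finset.mem_range.mp hi, rfl⟩

theorem alternatingMap_pow_eq_zero_of_monic (f : A [⋀^Fin m]→ₗ[R] N) (hp : p.Monic)
    (hb : aeval b p = 0) (hm : p.natDegree < m) : f (fun i ↦ b ^ (i : ℕ)) = 0 := by
  refine alternatingMap_eq_zero_of_mem_span f (i := ⟨p.natDegree, hm⟩) ?_
  refine Submodule.span_mono ?_ (pow_natDegree_mem_span_of_monic hp hb)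
  rintro _ ⟨j, hj, rfl⟩
  exact ⟨⟨j, hj.trans hm⟩, fun h ↦ hj.ne (congrArg Fin.val h), rfl⟩

variable (R A m) in
/-- The standard polynomial `∑ σ, sgn σ • x_{σ 1} ⋯ x_{σ m}` of degree `m` as a function on `Aᵐ`,
encoded as the alternatization of the product so that it is alternating by construction. -/
def standardPolynomial : A [⋀^Fin m]→ₗ[R] A :=
  (MultilinearMap.mkPiAlgebraFin R m A).alternatization

variable (R) in
theorem standardPolynomial_apply (x : Fin m → A) :
    standardPolynomial R A m x = ∑ σ : Equiv.Perm (Fin m),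
      (Equiv.Perm.sign σ : ℤ) • (List.ofFn fun i ↦ x (σ i)).prod :=
  MultilinearMap.alternatization_apply _ x

theorem standard_identity_at_alpha_beta_powers_general (hp : p.Monic) (hb : aeval b p = 0)
    (hm : p.natDegree < m) (a : A) :
    ∑ σ : Equiv.Perm (Fin m),
      (Equiv.Perm.sign σ : ℤ) • (List.ofFn fun i ↦ a * b ^ (σ i : ℕ)).prod = 0 := by
  rw [← standardPolynomial_apply R fun i : Fin m ↦ a * b ^ (i : ℕ)]
  exact alternatingMap_pow_eq_zero_of_monic
    ((standardPolynomial R A m).compLinearMap (LinearMap.mulLeft R a)) hp hb hm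

end Algebra

/-- For `n × n` matrices `α, β` over a field of characteristic zero, the standard polynomial
of degree `2n` evaluated at `α, αβ, αβ², …, αβ^{2n−1}` vanishes:
`∑_{σ ∈ S_{2n}} sgn(σ) (αβ^{σ(1)−1}) ⋯ (αβ^{σ(2n)−1}) = 0`. -/
theorem standard_identity_at_alpha_beta_powers (k : Type*) [Field k] [CharZero k]
    (n : ℕ) (hn : 1 ≤ n) (α β : Matrix (Fin n) (Fin n) k) :
    ∑ σ : Equiv.Perm (Fin (2 * n)),
      (Equiv.Perm.sign σ : ℤ) •
        ((List.ofFn fun i : Fin (2 * n) => α * β ^ (σ i : ℕ)).prod) = 0 := by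
  exact standard_identity_at_alpha_beta_powers_general β.charpoly_monic β.aeval_self_charpoly
    (by rw [β.charpoly_natDegree_eq_dim, Fintype.card_fin]; lia) α
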